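/- arXiv:2205.10105 — 2 statements merged into one kernel-verified Lean document; each statement's English description precedes it below -/
import Mathlib

section
/- Let T be a finite tree rooted at r and let P \subseteq V(T) \times V(T) be a nonempty set of terminal pairs. Let v be a vertex furthest from r such that there is a pair (s,t) \in P with both s,t \in V(T_v). Then every terminal pair path of P whose both endpoints lie in V(T_v) passes through v, and there exists a minimum-size P-multicut in T that contains v. -/
open SimpleGraph

section Defs

variable {V : Type*}

/-- `v` lies on every path from `a` to `b` in `G`; in a tree this says that `v`
lies on the unique `(a,b)`-path. -/
def OnPath (G : SimpleGraph V) (a b v : V) : Prop :=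
  ∀ p : G.Walk a b, p.IsPath → v ∈ p.support

/-- `u` belongs to the subtree `T_v` of the tree `G` rooted at `r`, i.e. `v` lies on
the unique `(r,u)`-path. -/
def InSubtree (G : SimpleGraph V) (r v u : V) : Prop :=
  OnPath G r u v

/-- The vertex set of the subtree `T_v` of the tree `G` rooted at `r`. -/
def SubtreeSet (G : SimpleGraph V) (r v : V) : Set V :=
  {u | InSubtree G r v u}

/-- `S` is a `P`-multicut in `G`: it meets every path between each terminal pair. -/
def IsMulticut (G : SimpleGraph V) (P : Set (V × V)) (S : Set V) : Prop :=
  ∀ s t : V, (s, t) ∈ P → ∀ p : G.Walk s t, p.IsPath → ∃ v ∈ S, v ∈ p.support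

/-- `S` is a `P`-multicut in the subgraph of `G` induced by `A`: it meets every
path staying inside `A` between each terminal pair with both ends in `A`. -/
def IsMulticutOn (G : SimpleGraph V) (A : Set V) (P : Set (V × V)) (S : Set V) : Prop :=
  ∀ s t : V, (s, t) ∈ P → s ∈ A → t ∈ A →
    ∀ p : G.Walk s t, p.IsPath → (∀ u ∈ p.support, u ∈ A) → ∃ v ∈ S, v ∈ p.support

/-- `w` is a least common ancestor of `u` and `v` in the tree `G` rooted at `r`:
`u, v ∈ T_w` and `w` is furthest from `r` with this property. -/
def IsLCA (G : SimpleGraph V) (r u v w : V) : Prop :=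
  InSubtree G r w u ∧ InSubtree G r w v ∧
    ∀ w' : V, InSubtree G r w' u → InSubtree G r w' v → G.dist r w' ≤ G.dist r w

/-- `X` is closed under taking least common ancestors. -/
def LCAClosed (G : SimpleGraph V) (r : V) (X : Set V) : Prop :=
  ∀ u ∈ X, ∀ v ∈ X, ∀ w : V, IsLCA G r u v w → w ∈ X

/-- The vertex set of `T^†_{v,x}` for a descendant `x` of `v`:
all vertices `u ≠ v` of `T_v` that either lie in `T_x` or whose path to `x`
avoids `v`.  (For `v = x` this is `T_x \ {x}`.) -/
def TdagSet (G : SimpleGraph V) (r v x : V) : Set V :=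
  {u | u ≠ v ∧ InSubtree G r v u ∧
    (InSubtree G r x u ∨ ∀ p : G.Walk u x, p.IsPath → v ∉ p.support)}

/-- `I[v]`: terminal pairs with both endpoints in `T_v` whose path passes through `v`. -/
def Ibr (G : SimpleGraph V) (r : V) (P : Set (V × V)) (v : V) : Set (V × V) :=
  {q | q ∈ P ∧ InSubtree G r v q.1 ∧ InSubtree G r v q.2 ∧ OnPath G q.1 q.2 v}

/-- `O[v]`: terminal pairs with exactly one endpoint in `T_v`. -/
def Obr (G : SimpleGraph V) (r : V) (P : Set (V × V)) (v : V) : Set (V × V) :=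
  {q | q ∈ P ∧ ((InSubtree G r v q.1 ∧ ¬ InSubtree G r v q.2) ∨
    (¬ InSubtree G r v q.1 ∧ InSubtree G r v q.2))}

end Defs

theorem OnPath.walk {V : Type*} {G : SimpleGraph V} {a b v : V} (h : OnPath G a b v)
    (p : G.Walk a b) : v ∈ p.support := by
  classical
  exact p.support_bypass_subset (h _ p.bypass_isPath)

theorem inSubtree_of_walk {V : Type*} {G : SimpleGraph V} {r a b v : V}
    (h : InSubtree G r v a) (q : G.Walk a b) (hq : v ∉ q.support) : InSubtree G r v b := by
  intro p _
  by_contra hv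
  have := OnPath.walk h (p.append q.reverse)
  rw [Walk.mem_support_append_iff, Walk.support_reverse, List.mem_reverse] at this
  tauto

theorem inSubtree_of_mem_path {V : Type*} {G : SimpleGraph V} {r a b v x : V}
    (ha : InSubtree G r v a) (hb : InSubtree G r v b) (p : G.Walk a b) (hp : p.IsPath)
    (hx : x ∈ p.support) : InSubtree G r v x := by
  classical
  by_cases h1 : v ∈ (p.takeUntil x hx).support
  · by_cases h2 : v ∈ (p.dropUntil x hx).support
    · have hvx : v = x := by
        by_contra hne
        have hn := hp.support_nodup
        rw [← p.take_spec hx, Walk.support_append, List.nodup_append] at hn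
        have h3 : v ∈ (p.dropUntil x hx).support.tail := by
          rw [Walk.mem_support_iff] at h2
          tauto
        exact hn.2.2 v h1 v h3 rfl
      subst hvx
      intro q _
      exact q.end_mem_support
    · refine inSubtree_of_walk hb (p.dropUntil x hx).reverse ?_
      simpa using h2
  · exact inSubtree_of_walk ha _ h1

theorem child_subtree {V : Type*} {G : SimpleGraph V} (hT : G.IsTree) {r v w t : V}
    (hvw : G.Adj v w) (ht : InSubtree G r v t) (k : G.Walk w t) (hk : v ∉ k.support) :
    InSubtree G r w t := by
  classical
  intro p hp
  have hv := ht p hp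
  have hk' : (Walk.cons hvw k.bypass).IsPath := by
    rw [Walk.cons_isPath_iff]
    exact ⟨k.bypass_isPath, fun h => hk (k.support_bypass_subset h)⟩
  have he : p.dropUntil v hv = Walk.cons hvw k.bypass :=
    (hT.existsUnique_path v t).unique (hp.dropUntil hv) hk'
  apply p.support_dropUntil_subset hv
  rw [he]
  simp

theorem part_one {V : Type*} (T : SimpleGraph V) (hT : T.IsTree) (r : V)
    (P : Set (V × V)) (v : V)
    (hfar : ∀ u : V, (∃ s t : V, (s, t) ∈ P ∧ InSubtree T r u s ∧ InSubtree T r u t) →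
      T.dist r u ≤ T.dist r v) (s t : V) (hst : (s, t) ∈ P) (hs : InSubtree T r v s)
    (ht : InSubtree T r v t) : OnPath T s t v := by
  classical
  intro p hp
  by_contra hv
  obtain ⟨d, hd, -⟩ := hT.existsUnique_path v s
  cases d with
  | nil => exact hv p.start_mem_support
  | @cons _ w _ hvw q =>
    rw [Walk.cons_isPath_iff] at hd
    have hsw := child_subtree hT hvw hs q hd.2
    have htw := child_subtree hT hvw ht (q.append p) (by
      rw [Walk.mem_support_append_iff]; tauto)
    have hle := hfar w ⟨s, t, hst, hsw, htw⟩
    have hw : InSubtree T r v w := inSubtree_of_walk hs q.reverse (by simpa using hd.2)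
    obtain ⟨k, hk⟩ := hT.connected.exists_walk_length_eq_dist r w
    have hvk := OnPath.walk hw k
    have h1 := k.length_takeUntil_lt hvk hvw.ne
    have h2 := dist_le (k.takeUntil v hvk)
    omega

/-- Let `v` be a vertex furthest from the root `r` such that some terminal pair
has both endpoints in `T_v`.  Then every terminal pair path with both endpoints
in `T_v` passes through `v`, and some minimum-size `P`-multicut contains `v`. -/
theorem stmt_4 {V : Type*} [Fintype V] (T : SimpleGraph V) (hT : T.IsTree) (r : V)
    (P : Set (V × V)) (hP : P.Nonempty) (v : V)
    (hex : ∃ s t : V, (s, t) ∈ P ∧ InSubtree T r v s ∧ InSubtree T r v t)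
    (hfar : ∀ u : V, (∃ s t : V, (s, t) ∈ P ∧ InSubtree T r u s ∧ InSubtree T r u t) →
      T.dist r u ≤ T.dist r v) :
    (∀ s t : V, (s, t) ∈ P → InSubtree T r v s → InSubtree T r v t → OnPath T s t v) ∧
    ∃ S : Set V, IsMulticut T P S ∧ v ∈ S ∧
      ∀ S' : Set V, IsMulticut T P S' → S.ncard ≤ S'.ncard := by
  classical
  have h1 := part_one T hT r P v hfar
  refine ⟨h1, ?_⟩
  obtain ⟨S, hS, hmin⟩ : ∃ S : Set V, IsMulticut T P S ∧
      ∀ S' : Set V, IsMulticut T P S' → S.ncard ≤ S'.ncard := by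
    have hne : {S : Set V | IsMulticut T P S}.Nonempty :=
      ⟨Set.univ, fun s t _ p _ => ⟨s, trivial, p.start_mem_support⟩⟩
    refine ⟨Function.argminOn Set.ncard _ hne, Function.argminOn_mem Set.ncard _ hne, ?_⟩
    intro S' hS'
    exact Function.argminOn_le Set.ncard _ hS'
  obtain ⟨s, t, hst, hs, ht⟩ := hex
  obtain ⟨p, hp, -⟩ := hT.existsUnique_path s t
  obtain ⟨x, hxS, hxp⟩ := hS s t hst p hp
  have hx := inSubtree_of_mem_path hs ht p hp hxp
  refine ⟨insert v (S \ {x}), ?_, Set.mem_insert _ _, ?_⟩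
  · intro a b hab q hq
    by_cases hvq : v ∈ q.support
    · exact ⟨v, Set.mem_insert _ _, hvq⟩
    obtain ⟨y, hyS, hyq⟩ := hS a b hab q hq
    by_cases hyx : y = x
    · subst hyx
      have ha : InSubtree T r v a := inSubtree_of_walk hx (q.takeUntil y hyq).reverse (by
        rw [Walk.support_reverse, List.mem_reverse]
        exact fun h => hvq (q.support_takeUntil_subset hyq h))
      have hb : InSubtree T r v b := inSubtree_of_walk hx (q.dropUntil y hyq)
        (fun h => hvq (q.support_dropUntil_subset hyq h))
      exact absurd (h1 a b hab ha hb q hq) hvq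
    · exact ⟨y, Set.mem_insert_of_mem _ ⟨hyS, hyx⟩, hyq⟩
  · intro S' hS'
    refine le_trans ?_ (hmin S' hS')
    have h2 := Set.ncard_insert_le v (S \ {x})
    have h3 := Set.ncard_diff_singleton_add_one hxS (Set.toFinite S)
    omega
end

section
/- Let T be a finite tree rooted at r, let P \subseteq V(T) \times V(T) be a set of terminal pairs, and let X be a P-multicut in T that is closed under taking least common ancestors. Let x \in X and let y \in X be the unique closest strict ancestor of x belonging to X. Then for every vertex v on the (y,x)-path other than y, every terminal pair path of P contained in T_v either passes through x or is contained in T_x; equivalently, no terminal pair path of P is contained in T_v - V(T_x). -/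
open SimpleGraph

/-- Let `X` be an lca-closed `P`-multicut, `x ∈ X`, and `y ∈ X` the closest
strict ancestor of `x` in `X`.  Then for every `v ≠ y` on the `(y,x)`-path, no
terminal pair path of `P` is contained in `T_v - V(T_x)`. -/
theorem stmt_6 {V : Type*} [Fintype V] (T : SimpleGraph V) (hT : T.IsTree) (r : V)
    (P : Set (V × V)) (X : Set V)
    (hX : IsMulticut T P X) (hcl : LCAClosed T r X)
    (x y : V) (hx : x ∈ X) (hy : y ∈ X)
    (hanc : y ≠ x ∧ InSubtree T r y x)
    (hclosest : ∀ y' ∈ X, y' ≠ x → InSubtree T r y' x → T.dist r y' ≤ T.dist r y)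
    (v : V) (hv : OnPath T y x v) (hvy : v ≠ y) :
    ¬ ∃ s t : V, (s, t) ∈ P ∧ ∃ p : T.Walk s t, p.IsPath ∧
        ∀ u ∈ p.support, InSubtree T r v u ∧ ¬ InSubtree T r x u := by
  classical
  rintro ⟨s, t, hst, p, hp, hsup⟩
  obtain ⟨u, huX, hup⟩ := hX s t hst p hp
  obtain ⟨hvu, hxu⟩ := hsup u hup
  have hvx : InSubtree T r v x := by
    intro q hq
    have hyq := hanc.2 q hq
    exact q.support_dropUntil_subset hyq (hv _ (hq.dropUntil hyq))
  have hlt : T.dist r y < T.dist r v := by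
    obtain ⟨q, hq, hlen⟩ := hT.connected.exists_path_of_dist r x
    have hyq := hanc.2 q hq
    have hvq := hv _ (hq.dropUntil hyq)
    have e1 := congrArg Walk.length (q.take_spec hyq)
    have e2 := congrArg Walk.length ((q.dropUntil y hyq).take_spec hvq)
    rw [Walk.length_append] at e1 e2
    have h1 := dist_le (q.takeUntil y hyq)
    have h2 := dist_le ((q.dropUntil y hyq).dropUntil v hvq)
    have h3 := hT.connected.dist_triangle (u := r) (v := v) (w := x)
    have h4 : 0 < ((q.dropUntil y hyq).takeUntil v hvq).length := by
      rcases Nat.eq_zero_or_pos ((q.dropUntil y hyq).takeUntil v hvq).length with h | h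
      · exact absurd (Walk.eq_of_length_eq_zero h).symm hvy
      · exact h
    omega
  obtain ⟨w, hw, hmax⟩ := Set.exists_max_image
    {w | InSubtree T r w u ∧ InSubtree T r w x} (fun w => T.dist r w) (Set.toFinite _)
    ⟨v, hvu, hvx⟩
  have hwX : w ∈ X := hcl u huX x hx w ⟨hw.1, hw.2, fun w' h1 h2 => hmax w' ⟨h1, h2⟩⟩
  have hwx : w ≠ x := by
    rintro rfl
    exact hxu hw.1
  have h1 := hclosest w hwX hwx hw.2
  have h2 : T.dist r v ≤ T.dist r w := hmax v ⟨hvu, hvx⟩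
  omega
end
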